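/- If (X.u, Y.v) ∈ Deriv'(𝒫_𝒞) and σ ∈ Σ has ⟨σ⟩ = ⊕, then (X.uσ, Y.vσ) ∈ Deriv'(𝒫_𝒞); if instead ⟨σ⟩ = ⊖, then (Y.vσ, X.uσ) ∈ Deriv'(𝒫_𝒞). -/

import Mathlib

/-- The two-element sign monoid `{⊕, ⊖}` of variances. -/
inductive Sign : Type where
  | pos
  | neg
deriving DecidableEq, Repr

/-- Multiplication in the sign monoid (`⊕` is the identity, `⊖ · ⊖ = ⊕`). -/
def Sign.mul : Sign → Sign → Sign
  | .pos, s => s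
  | .neg, .pos => .neg
  | .neg, .neg => .pos

/-- Variance of a word in `Σ*`: `⟨ε⟩ = ⊕`, `⟨xw⟩ = ⟨x⟩·⟨w⟩`. -/
def wordSign {L : Type} (sgn : L → Sign) : List L → Sign
  | [] => .pos
  | x :: w => (sgn x).mul (wordSign sgn w)

/-- A derived type variable `α.w` with base type variable `α ∈ 𝒱` and word `w ∈ Σ*`. -/
structure DTV (V L : Type) : Type where
  base : V
  word : List L

/-- Appending a single field label to a derived type variable: `α.ℓ`. -/
def DTV.app {V L : Type} (α : DTV V L) (ℓ : L) : DTV V L :=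
  ⟨α.base, α.word ++ [ℓ]⟩

/-- A constraint: either `VAR X` or `X ⊑ Y` for derived type variables. -/
inductive Constraint (V L : Type) : Type where
  | var : DTV V L → Constraint V L
  | sub : DTV V L → DTV V L → Constraint V L

/-- Entailment `𝒞 ⊢ c`: the least relation containing `𝒞` and closed under the
deduction rules T-Left, T-Right, T-InheritL, T-InheritR, T-Prefix, S-Refl,
S-Trans, S-Field⊕, S-Field⊖ and S-Pointer. -/
inductive Entails {V L : Type} (sgn : L → Sign) (load store : L)
    (C : Set (Constraint V L)) : Constraint V L → Prop where
  | ax {c} : c ∈ C → Entails sgn load store C c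
  | tLeft {α β} : Entails sgn load store C (.sub α β) →
      Entails sgn load store C (.var α)
  | tRight {α β} : Entails sgn load store C (.sub α β) →
      Entails sgn load store C (.var β)
  | tInheritL {α β : DTV V L} {ℓ} : Entails sgn load store C (.sub α β) →
      Entails sgn load store C (.var (α.app ℓ)) →
      Entails sgn load store C (.var (β.app ℓ))
  | tInheritR {α β : DTV V L} {ℓ} : Entails sgn load store C (.sub α β) →
      Entails sgn load store C (.var (β.app ℓ)) →
      Entails sgn load store C (.var (α.app ℓ))
  | tPrefix {α : DTV V L} {ℓ} : Entails sgn load store C (.var (α.app ℓ)) →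
      Entails sgn load store C (.var α)
  | sRefl {α} : Entails sgn load store C (.var α) →
      Entails sgn load store C (.sub α α)
  | sTrans {α β γ} : Entails sgn load store C (.sub α β) →
      Entails sgn load store C (.sub β γ) →
      Entails sgn load store C (.sub α γ)
  | sFieldPos {α β : DTV V L} {ℓ} : Entails sgn load store C (.sub α β) →
      Entails sgn load store C (.var (β.app ℓ)) → sgn ℓ = .pos →
      Entails sgn load store C (.sub (α.app ℓ) (β.app ℓ))
  | sFieldNeg {α β : DTV V L} {ℓ} : Entails sgn load store C (.sub α β) →
      Entails sgn load store C (.var (β.app ℓ)) → sgn ℓ = .neg →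
      Entails sgn load store C (.sub (β.app ℓ) (α.app ℓ))
  | sPointer {α : DTV V L} : Entails sgn load store C (.var (α.app load)) →
      Entails sgn load store C (.var (α.app store)) →
      Entails sgn load store C (.sub (α.app store) (α.app load))

/-- `𝒞` is closed under T-Left, T-Right and T-Prefix. -/
def ClosedTLRP {V L : Type} (C : Set (Constraint V L)) : Prop :=
  (∀ α β : DTV V L, Constraint.sub α β ∈ C →
      Constraint.var α ∈ C ∧ Constraint.var β ∈ C) ∧
  (∀ (α : DTV V L) (ℓ : L), Constraint.var (α.app ℓ) ∈ C →
      Constraint.var α ∈ C)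

/-- Control states of the pushdown system `𝒫_𝒞`:
`Ṽ = ((lhs(𝒱_i) ⨿ rhs(𝒱_i) ⨿ 𝒱_u) × {⊕,⊖}) ∪ {#Start, #End}`.
`lt x a` is `(x_L)^a`, `rt x a` is `(x_R)^a`, `un x a` is `x^a` for
uninteresting `x`. -/
inductive Ctl (V : Type) : Type where
  | start : Ctl V
  | fin : Ctl V
  | lt : V → Sign → Ctl V
  | rt : V → Sign → Ctl V
  | un : V → Sign → Ctl V

/-- Stack symbols `Σ̃ = Σ ∪ {v^⊕, v^⊖ : v ∈ 𝒱_i}`. -/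
inductive StkSym (V L : Type) : Type where
  | lbl : L → StkSym V L
  | tv : V → Sign → StkSym V L

/-- A word of field labels seen as a stack word. -/
def symWord {V L : Type} (u : List L) : List (StkSym V L) :=
  u.map StkSym.lbl

/-- `lhs(x)^a`: tagged `x_L` if `x` is interesting, plain otherwise. -/
def lhsCtl {V : Type} (I : V → Bool) (x : V) (a : Sign) : Ctl V :=
  if I x then .lt x a else .un x a

/-- `rhs(x)^a`: tagged `x_R` if `x` is interesting, plain otherwise. -/
def rhsCtl {V : Type} (I : V → Bool) (x : V) (a : Sign) : Ctl V :=
  if I x then .rt x a else .un x a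

/-- A configuration of an unconstrained pushdown system: a control state
together with a stack word. -/
abbrev PDSConfig (V L : Type) : Type := Ctl V × List (StkSym V L)

/-- A transition rule `⟨X; u⟩ ↪ ⟨Y; v⟩`. -/
abbrev PDSRule (V L : Type) : Type := PDSConfig V L × PDSConfig V L

/-- `rule⊕(p.u ⊑ q.v) = ⟨lhs(p)^{⟨u⟩}; u⟩ ↪ ⟨rhs(q)^{⟨v⟩}; v⟩`. -/
def rulePos {V L : Type} (I : V → Bool) (sgn : L → Sign)
    (c : DTV V L × DTV V L) : PDSRule V L :=
  ((lhsCtl I c.1.base (wordSign sgn c.1.word), symWord c.1.word),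
   (rhsCtl I c.2.base (wordSign sgn c.2.word), symWord c.2.word))

/-- `rule⊖(p.u ⊑ q.v) = ⟨lhs(q)^{⊖·⟨v⟩}; v⟩ ↪ ⟨rhs(p)^{⊖·⟨u⟩}; u⟩`. -/
def ruleNeg {V L : Type} (I : V → Bool) (sgn : L → Sign)
    (c : DTV V L × DTV V L) : PDSRule V L :=
  ((lhsCtl I c.2.base (Sign.neg.mul (wordSign sgn c.2.word)), symWord c.2.word),
   (rhsCtl I c.1.base (Sign.neg.mul (wordSign sgn c.1.word)), symWord c.1.word))

/-- The transition rules `Δ = Δ_𝒞 ∪ Δ_ptr ∪ Δ_start ∪ Δ_end` of the pushdown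
system `𝒫_𝒞` associated to a set `𝒞` of subtype constraints between derived
type variables. -/
def Delta {V L : Type} (I : V → Bool) (sgn : L → Sign) (load store : L)
    (C : Set (DTV V L × DTV V L)) : Set (PDSRule V L) :=
  {r | ∃ c ∈ C, r = rulePos I sgn c ∨ r = ruleNeg I sgn c} ∪
  {r | ∃ v : DTV V L,
      r = rulePos I sgn (v.app store, v.app load) ∨
      r = ruleNeg I sgn (v.app store, v.app load)} ∪
  {r | ∃ (v : V) (a : Sign), I v ∧
      r = ((.start, [StkSym.tv v a]), (.lt v a, ([] : List (StkSym V L))))} ∪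
  {r | ∃ (v : V) (a : Sign), I v ∧
      r = ((.rt v a, ([] : List (StkSym V L))), (.fin, [StkSym.tv v a]))}

/-- One transition step of an unconstrained pushdown system:
`(X, w) ⟶ (Y, w')` iff there is a suffix `s` and a rule `⟨X; u⟩ ↪ ⟨Y; v⟩`
with `w = us` and `w' = vs`. -/
def PDSStep {V L : Type} (Δ : Set (PDSRule V L))
    (c c' : PDSConfig V L) : Prop :=
  ∃ r ∈ Δ, ∃ s : List (StkSym V L),
    c = (r.1.1, r.1.2 ++ s) ∧ c' = (r.2.1, r.2.2 ++ s)

/-- The reflexive-transitive closure `⟶*` of the transition relation. -/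
def PDSSteps {V L : Type} (Δ : Set (PDSRule V L)) :
    PDSConfig V L → PDSConfig V L → Prop :=
  Relation.ReflTransGen (PDSStep Δ)

/-- `Deriv(𝒫_𝒞)`, as a relation on triples `X^a u`: `X, Y` are interesting and
`(#Start, X^a u) ⟶* (#End, Y^b v)`. -/
def Deriv {V L : Type} (I : V → Bool) (sgn : L → Sign) (load store : L)
    (C : Set (DTV V L × DTV V L)) :
    (V × Sign × List L) → (V × Sign × List L) → Prop :=
  fun p q =>
    I p.1 ∧ I q.1 ∧
      PDSSteps (Delta I sgn load store C)
        (.start, StkSym.tv p.1 p.2.1 :: symWord p.2.2)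
        (.fin, StkSym.tv q.1 q.2.1 :: symWord q.2.2)

/-- `Deriv'(𝒫_𝒞) = {(X.u, Y.v) : (X^{⟨u⟩} u, Y^{⟨v⟩} v) ∈ Deriv(𝒫_𝒞)}`. -/
def Deriv' {V L : Type} (I : V → Bool) (sgn : L → Sign) (load store : L)
    (C : Set (DTV V L × DTV V L)) :
    (V × List L) → (V × List L) → Prop :=
  fun p q =>
    Deriv I sgn load store C (p.1, wordSign sgn p.2, p.2)
      (q.1, wordSign sgn q.2, q.2)

theorem Sign.neg_mul_neg_mul (a : Sign) : Sign.neg.mul (Sign.neg.mul a) = a := by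
  cases a <;> rfl

theorem wordSign_append_singleton_of_pos {L : Type} (sgn : L → Sign) {σ : L}
    (hσ : sgn σ = .pos) (w : List L) : wordSign sgn (w ++ [σ]) = wordSign sgn w := by
  induction w with
  | nil => simp [wordSign, hσ, Sign.mul]
  | cons x w ih => simp [wordSign, ih]

theorem wordSign_append_singleton_of_neg {L : Type} (sgn : L → Sign) {σ : L}
    (hσ : sgn σ = .neg) (w : List L) :
    wordSign sgn (w ++ [σ]) = Sign.neg.mul (wordSign sgn w) := by
  induction w with
  | nil => simp [wordSign, hσ, Sign.mul]
  | cons x w ih =>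
    simp only [List.cons_append, wordSign, ih]
    cases sgn x <;> cases wordSign sgn w <;> rfl

/-- The involution on control states that exchanges `#Start` with `#End` and the tags
`L` with `R`, and flips the variance. -/
def Ctl.dual {V : Type} : Ctl V → Ctl V
  | .start => .fin
  | .fin => .start
  | .lt x a => .rt x (Sign.neg.mul a)
  | .rt x a => .lt x (Sign.neg.mul a)
  | .un x a => .un x (Sign.neg.mul a)

/-- The involution on stack symbols that flips the variance of type variables. -/
def StkSym.dual {V L : Type} : StkSym V L → StkSym V L
  | .lbl l => .lbl l
  | .tv x a => .tv x (Sign.neg.mul a)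

/-- The involution on configurations induced by `Ctl.dual` and `StkSym.dual`. -/
def PDSConfig.dual {V L : Type} (c : PDSConfig V L) : PDSConfig V L :=
  (c.1.dual, c.2.map StkSym.dual)

theorem dual_lhsCtl {V : Type} (I : V → Bool) (x : V) (a : Sign) :
    (lhsCtl I x a).dual = rhsCtl I x (Sign.neg.mul a) := by
  unfold lhsCtl rhsCtl
  split <;> rfl

theorem dual_rhsCtl {V : Type} (I : V → Bool) (x : V) (a : Sign) :
    (rhsCtl I x a).dual = lhsCtl I x (Sign.neg.mul a) := by
  unfold lhsCtl rhsCtl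
  split <;> rfl

theorem symWord_append_singleton {V L : Type} (u : List L) (σ : L) :
    (symWord (u ++ [σ]) : List (StkSym V L)) = symWord u ++ [.lbl σ] := by
  simp [symWord]

theorem map_dual_symWord {V L : Type} (u : List L) :
    (symWord u : List (StkSym V L)).map StkSym.dual = symWord u := by
  simp [symWord, StkSym.dual]

theorem dual_rulePos {V L : Type} (I : V → Bool) (sgn : L → Sign) (c : DTV V L × DTV V L) :
    (PDSConfig.dual (rulePos I sgn c).2, PDSConfig.dual (rulePos I sgn c).1) =
      ruleNeg I sgn c := by
  simp [PDSConfig.dual, rulePos, ruleNeg, dual_lhsCtl, dual_rhsCtl, map_dual_symWord]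

theorem dual_ruleNeg {V L : Type} (I : V → Bool) (sgn : L → Sign) (c : DTV V L × DTV V L) :
    (PDSConfig.dual (ruleNeg I sgn c).2, PDSConfig.dual (ruleNeg I sgn c).1) =
      rulePos I sgn c := by
  simp [PDSConfig.dual, rulePos, ruleNeg, dual_lhsCtl, dual_rhsCtl, map_dual_symWord,
    Sign.neg_mul_neg_mul]

theorem dual_mem_Delta {V L : Type} {I : V → Bool} {sgn : L → Sign} {load store : L}
    {C : Set (DTV V L × DTV V L)} {r : PDSRule V L} (hr : r ∈ Delta I sgn load store C) :
    (PDSConfig.dual r.2, PDSConfig.dual r.1) ∈ Delta I sgn load store C := by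
  rcases hr with ((⟨c, hc, rfl | rfl⟩ | ⟨w, rfl | rfl⟩) | ⟨x, a, hx, rfl⟩) | ⟨x, a, hx, rfl⟩
  · exact .inl (.inl (.inl ⟨c, hc, .inr (dual_rulePos I sgn c)⟩))
  · exact .inl (.inl (.inl ⟨c, hc, .inl (dual_ruleNeg I sgn c)⟩))
  · exact .inl (.inl (.inr ⟨w, .inr (dual_rulePos I sgn _)⟩))
  · exact .inl (.inl (.inr ⟨w, .inl (dual_ruleNeg I sgn _)⟩))
  · exact .inr ⟨x, Sign.neg.mul a, hx, rfl⟩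
  · exact .inl (.inr ⟨x, Sign.neg.mul a, hx, rfl⟩)

theorem PDSSteps.dual {V L : Type} {I : V → Bool} {sgn : L → Sign} {load store : L}
    {C : Set (DTV V L × DTV V L)} {c d : PDSConfig V L}
    (h : PDSSteps (Delta I sgn load store C) c d) :
    PDSSteps (Delta I sgn load store C) (PDSConfig.dual d) (PDSConfig.dual c) := by
  induction h with
  | refl => exact .refl
  | tail _ hstep ih =>
    obtain ⟨r, hr, s, rfl, rfl⟩ := hstep
    exact .head ⟨_, dual_mem_Delta hr, s.map StkSym.dual,
      by simp [PDSConfig.dual], by simp [PDSConfig.dual]⟩ ih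

theorem PDSSteps.append {V L : Type} {Δ : Set (PDSRule V L)} {c d : PDSConfig V L}
    (h : PDSSteps Δ c d) (t : List (StkSym V L)) :
    PDSSteps Δ (c.1, c.2 ++ t) (d.1, d.2 ++ t) := by
  induction h with
  | refl => exact .refl
  | tail _ hstep ih =>
    obtain ⟨r, hr, s, rfl, rfl⟩ := hstep
    exact .tail ih ⟨r, hr, s ++ t, by simp, by simp⟩

/-- if `(X.u, Y.v) ∈ Deriv'(𝒫_𝒞)` and `⟨σ⟩ = ⊕` then
`(X.uσ, Y.vσ) ∈ Deriv'(𝒫_𝒞)`; if instead `⟨σ⟩ = ⊖` then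
`(Y.vσ, X.uσ) ∈ Deriv'(𝒫_𝒞)`. -/
theorem deriv'_suffix {V L : Type} (I : V → Bool) (sgn : L → Sign)
    (load store : L) (hload : sgn load = .pos) (hstore : sgn store = .neg)
    (C : Set (DTV V L × DTV V L))
    (X Y : V) (u v : List L)
    (h : Deriv' I sgn load store C (X, u) (Y, v)) (σ : L) :
    (sgn σ = .pos →
      Deriv' I sgn load store C (X, u ++ [σ]) (Y, v ++ [σ])) ∧
    (sgn σ = .neg →
      Deriv' I sgn load store C (Y, v ++ [σ]) (X, u ++ [σ])) := by
  obtain ⟨hX, hY, hsteps⟩ := h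
  have happ := hsteps.append [StkSym.lbl σ]
  refine ⟨fun hσ => ⟨hX, hY, ?_⟩, fun hσ => ⟨hY, hX, ?_⟩⟩
  · simpa [wordSign_append_singleton_of_pos sgn hσ, symWord_append_singleton] using happ
  · simpa [wordSign_append_singleton_of_neg sgn hσ, symWord_append_singleton, map_dual_symWord,
      PDSConfig.dual, Ctl.dual, StkSym.dual] using happ.dual
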